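/- (Lorentz Enneper surfaces.) For ε = ±1 define φ^{(ε)} : ℝ² → ℝ³ by φ^{(ε)}(u,v) = ½(u + u³/3, −u + u³/3, −εu²) + ½(−v − v³/3, −v + v³/3, −v²). Then φ^{(ε)}_{uv} = 0, ⟨φ^{(ε)}_u, φ^{(ε)}_u⟩ = ⟨φ^{(ε)}_v, φ^{(ε)}_v⟩ = 0, and ⟨φ^{(ε)}_u, φ^{(ε)}_v⟩ = ½(1 + εuv)²; hence φ^{(ε)} is a timelike minimal surface with induced metric I = (1 + εuv)² du dv. -/

import Mathlib

noncomputable section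

/-- The Minkowski bilinear form on `𝔼³₁ = ℝ³`: `⟨a,b⟩ = −a₁b₁ + a₂b₂ + a₃b₃`. -/
def mink (a b : ℝ × ℝ × ℝ) : ℝ := -(a.1 * b.1) + a.2.1 * b.2.1 + a.2.2 * b.2.2

/-- Partial derivative in the first coordinate. -/
def pu {E : Type*} [NormedAddCommGroup E] [NormedSpace ℝ E] (f : ℝ × ℝ → E) (w : ℝ × ℝ) : E :=
  fderiv ℝ f w (1, 0)

/-- Partial derivative in the second coordinate. -/
def pv {E : Type*} [NormedAddCommGroup E] [NormedSpace ℝ E] (f : ℝ × ℝ → E) (w : ℝ × ℝ) : E :=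
  fderiv ℝ f w (0, 1)

/-- The Lorentz Enneper surface `φ^{(ε)}(u,v) = ½(u+u³/3, −u+u³/3, −εu²) + ½(−v−v³/3, −v+v³/3, −v²)`. -/
def enneper (ε : ℝ) (z : ℝ × ℝ) : ℝ × ℝ × ℝ :=
  (1/2 * (z.1 + z.1^3/3) + 1/2 * (-z.2 - z.2^3/3),
   1/2 * (-z.1 + z.1^3/3) + 1/2 * (-z.2 + z.2^3/3),
   1/2 * (-(ε * z.1^2)) + 1/2 * (-z.2^2))

/-!
The Enneper surface is a sum `α(u) + β(v)` of two curves, so it solves the wave equation. In spinor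
coordinates `β'(v)` is minus the null vector of `(1, -v)` and, because `ε² = 1`, `α'(u)` is the null
vector of `(εu, 1)`. The Minkowski product of two null vectors is `-1/2` times the squared
determinant of their spinors: it vanishes when the spinors agree, and here it gives
`⟨φ_u, φ_v⟩ = 1/2 * (1 + εuv)²`.
-/

section TranslationSurface

variable {E : Type*} [NormedAddCommGroup E] [NormedSpace ℝ E] {α β : ℝ → E} {w : ℝ × ℝ}

theorem hasFDerivAt_comp_fst_add_comp_snd {a b : E} (hα : HasDerivAt α a w.1)
    (hβ : HasDerivAt β b w.2) :
    HasFDerivAt (fun z : ℝ × ℝ => α z.1 + β z.2)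
      ((ContinuousLinearMap.toSpanSingleton ℝ a).coprod
        (ContinuousLinearMap.toSpanSingleton ℝ b)) w :=
  (hα.hasFDerivAt.comp w hasFDerivAt_fst).add (hβ.hasFDerivAt.comp w hasFDerivAt_snd)

theorem pu_comp_fst_add_comp_snd {a : E} (hα : HasDerivAt α a w.1)
    (hβ : DifferentiableAt ℝ β w.2) : pu (fun z => α z.1 + β z.2) w = a := by
  simp [pu, (hasFDerivAt_comp_fst_add_comp_snd hα hβ.hasDerivAt).fderiv]

theorem pv_comp_fst_add_comp_snd {b : E} (hα : DifferentiableAt ℝ α w.1)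
    (hβ : HasDerivAt β b w.2) : pv (fun z => α z.1 + β z.2) w = b := by
  simp [pv, (hasFDerivAt_comp_fst_add_comp_snd hα.hasDerivAt hβ).fderiv]

theorem pv_comp_fst (hα : DifferentiableAt ℝ α w.1) : pv (fun z => α z.1) w = 0 := by
  simpa using pv_comp_fst_add_comp_snd hα (hasDerivAt_const w.2 (0 : E))

theorem pv_pu_comp_fst_add_comp_snd {α' : ℝ → E} (hα : ∀ u, HasDerivAt α (α' u) u)
    (hα' : DifferentiableAt ℝ α' w.1) (hβ : Differentiable ℝ β) :
    pv (pu fun z => α z.1 + β z.2) w = 0 := by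
  have hpu : (pu fun z => α z.1 + β z.2) = fun z => α' z.1 :=
    funext fun z => pu_comp_fst_add_comp_snd (hα z.1) (hβ z.2)
  rw [hpu]
  exact pv_comp_fst hα'

end TranslationSurface

section NullVector

theorem mink_neg_left (a b : ℝ × ℝ × ℝ) : mink (-a) b = -mink a b := by
  simp only [mink, Prod.fst_neg, Prod.snd_neg]
  ring

theorem mink_neg_right (a b : ℝ × ℝ × ℝ) : mink a (-b) = -mink a b := by
  simp only [mink, Prod.fst_neg, Prod.snd_neg]
  ring

/-- The null vector of `𝔼³₁` with spinor coordinates `(p, q)`, normalised so that the tangent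
vectors of the curves generating the Enneper surface are such vectors up to sign. -/
def nullVector (p q : ℝ) : ℝ × ℝ × ℝ :=
  (1 / 2 * (p ^ 2 + q ^ 2), 1 / 2 * (p ^ 2 - q ^ 2), -(p * q))

theorem mink_nullVector (p q r s : ℝ) :
    mink (nullVector p q) (nullVector r s) = -(1 / 2) * (p * s - q * r) ^ 2 := by
  simp only [mink, nullVector]
  ring

theorem mink_nullVector_self (p q : ℝ) : mink (nullVector p q) (nullVector p q) = 0 := by
  rw [mink_nullVector]
  ring

end NullVector

section EnneperCurves

/-- The curve `α` in the decomposition `φ^{(ε)}(u,v) = α(u) + β(v)` of the Enneper surface; it is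
null for `ε = ±1`. -/
def enneperCurveU (ε u : ℝ) : ℝ × ℝ × ℝ :=
  (1 / 2 * (u + u ^ 3 / 3), 1 / 2 * (-u + u ^ 3 / 3), 1 / 2 * (-(ε * u ^ 2)))

/-- The null curve `β` in the decomposition `φ^{(ε)}(u,v) = α(u) + β(v)` of the Enneper surface. -/
def enneperCurveV (v : ℝ) : ℝ × ℝ × ℝ :=
  (1 / 2 * (-v - v ^ 3 / 3), 1 / 2 * (-v + v ^ 3 / 3), 1 / 2 * (-v ^ 2))

theorem enneper_eq_enneperCurveU_add_enneperCurveV (ε : ℝ) :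
    enneper ε = fun z => enneperCurveU ε z.1 + enneperCurveV z.2 :=
  rfl

theorem hasDerivAt_enneperCurveU (ε u : ℝ) :
    HasDerivAt (enneperCurveU ε) (1 / 2 * (1 + u ^ 2), 1 / 2 * (-1 + u ^ 2), -(ε * u)) u := by
  have hid := hasDerivAt_id' u
  have hcube := (hid.pow 3).div_const 3
  refine .prodMk (((hid.add hcube).const_mul (1 / 2)).congr_deriv ?_)
    (.prodMk (((hid.neg.add hcube).const_mul (1 / 2)).congr_deriv ?_)
      ((((hid.pow 2).const_mul ε).neg.const_mul (1 / 2)).congr_deriv ?_)) <;> dsimp <;> ring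

theorem hasDerivAt_enneperCurveV (v : ℝ) :
    HasDerivAt enneperCurveV (-nullVector 1 (-v)) v := by
  have hid := hasDerivAt_id' v
  have hcube := (hid.pow 3).div_const 3
  refine .prodMk (((hid.neg.sub hcube).const_mul (1 / 2)).congr_deriv ?_)
    (.prodMk (((hid.neg.add hcube).const_mul (1 / 2)).congr_deriv ?_)
      ((((hid.pow 2).neg).const_mul (1 / 2)).congr_deriv ?_)) <;> dsimp [nullVector] <;> ring

theorem pu_enneper (ε : ℝ) (w : ℝ × ℝ) :
    pu (enneper ε) w = (1 / 2 * (1 + w.1 ^ 2), 1 / 2 * (-1 + w.1 ^ 2), -(ε * w.1)) := by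
  rw [enneper_eq_enneperCurveU_add_enneperCurveV]
  exact pu_comp_fst_add_comp_snd (hasDerivAt_enneperCurveU ε w.1)
    (hasDerivAt_enneperCurveV w.2).differentiableAt

theorem pu_enneper_eq_nullVector {ε : ℝ} (hε : ε ^ 2 = 1) (w : ℝ × ℝ) :
    pu (enneper ε) w = nullVector (ε * w.1) 1 := by
  simp only [pu_enneper, nullVector, mul_pow, hε]
  ring_nf

theorem pv_enneper_eq_neg_nullVector (ε : ℝ) (w : ℝ × ℝ) :
    pv (enneper ε) w = -nullVector 1 (-w.2) := by
  rw [enneper_eq_enneperCurveU_add_enneperCurveV]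
  exact pv_comp_fst_add_comp_snd (hasDerivAt_enneperCurveU ε w.1).differentiableAt
    (hasDerivAt_enneperCurveV w.2)

theorem pv_pu_enneper (ε : ℝ) (w : ℝ × ℝ) : pv (pu (enneper ε)) w = 0 := by
  rw [enneper_eq_enneperCurveU_add_enneperCurveV]
  exact pv_pu_comp_fst_add_comp_snd (hasDerivAt_enneperCurveU ε) (by fun_prop)
    fun v => (hasDerivAt_enneperCurveV v).differentiableAt

end EnneperCurves

/-- Lorentz Enneper surfaces: for `ε = ±1`, `φ^{(ε)}` is a timelike minimal surface
(`φ_uv = 0`, `⟨φ_u,φ_u⟩ = ⟨φ_v,φ_v⟩ = 0`) with `⟨φ_u,φ_v⟩ = ½(1+εuv)²`,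
i.e. induced metric `(1+εuv)² du dv`. -/
theorem lorentz_enneper_surface (ε : ℝ) (hε : ε = 1 ∨ ε = -1) :
    ∀ w : ℝ × ℝ,
      pv (pu (enneper ε)) w = 0 ∧
      mink (pu (enneper ε) w) (pu (enneper ε) w) = 0 ∧
      mink (pv (enneper ε) w) (pv (enneper ε) w) = 0 ∧
      mink (pu (enneper ε) w) (pv (enneper ε) w) = 1/2 * (1 + ε * w.1 * w.2) ^ 2 := by
  intro w
  have hε_sq : ε ^ 2 = 1 := sq_eq_one_iff.mpr hε
  refine ⟨pv_pu_enneper ε w, ?_, ?_, ?_⟩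
  · rw [pu_enneper_eq_nullVector hε_sq, mink_nullVector_self]
  · rw [pv_enneper_eq_neg_nullVector, mink_neg_left, mink_neg_right, neg_neg,
      mink_nullVector_self]
  · rw [pu_enneper_eq_nullVector hε_sq, pv_enneper_eq_neg_nullVector, mink_neg_right,
      mink_nullVector]
    ring
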